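/- Let M and N be categories and H : M × N ⥤ Cat a functor, and let π : Grothendieck H ⥤ M be the composite of Grothendieck.forget H with the first projection M × N ⥤ M. Then every morphism of M admits strongly cocartesian lifts along π: for every object X = ((m,n), x) of Grothendieck H and every φ : m ⟶ m' in M, there is a morphism η : X ⟶ X' in Grothendieck H with π(η) = φ such that for every ψ : m' ⟶ m'' and every morphism θ : X ⟶ Z with π(θ) = φ ≫ ψ there exists a unique ρ : X' ⟶ Z with π(ρ) = ψ and η ≫ ρ = θ. (This is the 1-categorical content of the claim in the paper's Proposition 8.6 that the projections of the span associated to a two-variable Cat-valued functor are coCartesian fibrations.) -/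

import Mathlib

/-!
STATEMENT 7: For categories `M`, `N` and a functor `H : M × N ⥤ Cat`, every morphism of `M`
admits strongly cocartesian lifts along the composite
`π = Grothendieck.forget H ⋙ Prod.fst M N : Grothendieck H ⥤ M`.
-/

open CategoryTheory

universe v₁ v₂ v₃ u₁ u₂ u₃

variable {M : Type u₁} {N : Type u₂} [Category.{v₁} M] [Category.{v₂} N]

/-!
A strongly `p`-cocartesian lift of a strongly `q`-cocartesian morphism is strongly cocartesian for
`p ⋙ q`, so `φ : m ⟶ m'` can be lifted in two stages. The morphism `(φ, 𝟙 n)` is strongly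
cocartesian for `M × N ⥤ M` because its `N`-component is invertible, and the transport morphism over
it is strongly cocartesian for `Grothendieck.forget H` because its fiber component is invertible.
-/

section StronglyCocartesian

open scoped CategoryTheory.Prod

variable {A B C : Type*} [Category* A] [Category* B] [Category* C]

theorem isHomLift_iff_map_eq (p : A ⥤ B) {a b : A} (f : p.obj a ⟶ p.obj b) (φ : a ⟶ b) :
    p.IsHomLift f φ ↔ p.map φ = f := by
  refine ⟨fun _ ↦ (IsHomLift.eq_of_isHomLift p f φ).symm, ?_⟩
  rintro rfl
  exact .map φ

theorem isStronglyCocartesian_map_iff (p : A ⥤ B) {a b : A} (φ : a ⟶ b) :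
    p.IsStronglyCocartesian (p.map φ) φ ↔
      ∀ ⦃c : A⦄ (g : p.obj b ⟶ p.obj c) (θ : a ⟶ c), p.map θ = p.map φ ≫ g →
        ∃! χ : b ⟶ c, p.map χ = g ∧ φ ≫ χ = θ := by
  simp only [← isHomLift_iff_map_eq]
  exact ⟨fun h _ g θ _ ↦ h.universal_property' g θ, fun h ↦ ⟨fun g θ _ ↦ h g θ ‹_›⟩⟩

theorem isStronglyCocartesian_comp (p : A ⥤ B) (q : B ⥤ C) {a b : A} {R S : B} {T U : C}
    (g : T ⟶ U) (f : R ⟶ S) (φ : a ⟶ b) [hg : q.IsStronglyCocartesian g f]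
    [hf : p.IsStronglyCocartesian f φ] : (p ⋙ q).IsStronglyCocartesian g φ := by
  subst_hom_lift p f φ
  subst_hom_lift q g (p.map φ)
  rw [isStronglyCocartesian_map_iff] at hf hg
  refine (isStronglyCocartesian_map_iff (p ⋙ q) φ).2 fun c h θ hθ ↦ ?_
  obtain ⟨k, ⟨hk, hkθ⟩, k_unique⟩ := hg h (p.map θ) hθ
  obtain ⟨χ, ⟨hχ, hχθ⟩, χ_unique⟩ := hf k θ hkθ.symm
  refine ⟨χ, ⟨(congrArg q.map hχ).trans hk, hχθ⟩, fun χ' ⟨hχ', hχθ'⟩ ↦ ?_⟩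
  have map_χ' : p.map χ' = k := k_unique _ ⟨hχ', by rw [← p.map_comp, hχθ']⟩
  exact χ_unique χ' ⟨map_χ', hχθ'⟩

theorem isStronglyCocartesian_prodFst_of_isIso {a a' : A} {b b' : B} (f : a ⟶ a') (g : b ⟶ b')
    [IsIso g] : (CategoryTheory.Prod.fst A B).IsStronglyCocartesian f (f ×ₘ g) := by
  refine (isStronglyCocartesian_map_iff (CategoryTheory.Prod.fst A B) (f ×ₘ g)).2
    fun c h θ hθ ↦ ⟨h ×ₘ (inv g ≫ θ.2), ⟨rfl, ?_⟩, ?_⟩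
  · exact Prod.ext hθ.symm (IsIso.hom_inv_id_assoc g θ.2)
  · rintro χ ⟨rfl, rfl⟩
    exact Prod.ext rfl (IsIso.inv_hom_id_assoc g χ.2).symm

theorem grothendieck_comp_eq_iff {F : C ⥤ Cat} {X Y Z : Grothendieck F} (η : X ⟶ Y) (χ : Y ⟶ Z)
    (θ : X ⟶ Z) :
    η ≫ χ = θ ↔ ∃ h : θ.base = η.base ≫ χ.base,
      (F.map χ.base).toFunctor.map η.fiber ≫ χ.fiber = eqToHom (by simp [h]) ≫ θ.fiber := by
  constructor
  · rintro rfl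
    refine ⟨rfl, ?_⟩
    simp only [Grothendieck.comp_fiber, eqToHom_trans_assoc, eqToHom_refl, Category.id_comp]
  · rintro ⟨h, fiber_eq⟩
    refine Grothendieck.ext _ _ h.symm ?_
    simp only [Grothendieck.comp_fiber, fiber_eq, eqToHom_trans_assoc, eqToHom_refl,
      Category.id_comp]

theorem isStronglyCocartesian_forget_of_isIso_fiber {F : C ⥤ Cat} {X Y : Grothendieck F}
    (η : X ⟶ Y) [IsIso η.fiber] : (Grothendieck.forget F).IsStronglyCocartesian η.base η := by
  refine (isStronglyCocartesian_map_iff (Grothendieck.forget F) η).2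
    fun Z (s : Y.base ⟶ Z.base) θ (hθ : θ.base = η.base ≫ s) ↦ ?_
  let χ : Y ⟶ Z :=
    ⟨s, inv ((F.map s).toFunctor.map η.fiber) ≫ eqToHom (by simp [hθ]) ≫ θ.fiber⟩
  refine ⟨χ, ⟨rfl, (grothendieck_comp_eq_iff η χ θ).2 ⟨hθ, IsIso.hom_inv_id_assoc _ _⟩⟩, ?_⟩
  rintro χ' ⟨(rfl : χ'.base = s), hχ'⟩
  obtain ⟨_, fiber_eq⟩ := (grothendieck_comp_eq_iff η χ' θ).1 hχ'
  have χ'_fiber : χ'.fiber = χ.fiber := (IsIso.eq_inv_comp _).2 fiber_eq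
  exact Grothendieck.ext _ _ rfl ((Category.id_comp _).trans χ'_fiber)

end StronglyCocartesian

/-- Every morphism of `M` admits strongly cocartesian lifts along the projection
`Grothendieck H ⥤ M`: for every object `X` of `Grothendieck H` and every morphism
`φ : π.obj X ⟶ m'` in `M`, there exist an object `X'` and a morphism `η : X ⟶ X'` which is
strongly cocartesian over `φ`. -/
theorem grothendieck_fst_exists_isStronglyCocartesian (H : M × N ⥤ Cat.{v₃, u₃})
    (X : Grothendieck H) {m' : M}
    (φ : (Grothendieck.forget H ⋙ CategoryTheory.Prod.fst M N).obj X ⟶ m') :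
    ∃ (X' : Grothendieck H) (η : X ⟶ X'),
      (Grothendieck.forget H ⋙ CategoryTheory.Prod.fst M N).IsStronglyCocartesian φ η := by
  let f : X.base ⟶ (m', X.base.2) := Prod.mkHom φ (𝟙 X.base.2)
  have : (CategoryTheory.Prod.fst M N).IsStronglyCocartesian φ f :=
    isStronglyCocartesian_prodFst_of_isIso φ (𝟙 X.base.2)
  have : IsIso (X.toTransport f).fiber := inferInstanceAs (IsIso (𝟙 _))
  have : (Grothendieck.forget H).IsStronglyCocartesian f (X.toTransport f) :=
    isStronglyCocartesian_forget_of_isIso_fiber (X.toTransport f)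
  exact ⟨X.transport f, X.toTransport f, isStronglyCocartesian_comp _ _ φ f _⟩
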